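/- For Lebesgue-almost every x ∈ (0,1), L_n(x, ℱ, 𝒞ℱ)/log n → 12 log 2/π² as n → ∞, where L_n(x, ℱ, 𝒞ℱ) is the Lochs index from the Farey to the continued fraction sequence of partitions. -/

import Mathlib

open MeasureTheory Filter Set

noncomputable section

/-- The set `E_n^ℱ` of endpoints of the Farey partition `F_n`: rationals of `[0,1]` whose
denominator in lowest terms is at most `n+1`. -/
def fareyPts (n : ℕ) : Set ℝ :=
  {x | ∃ p q : ℕ, q ≠ 0 ∧ q ≤ n + 1 ∧ p ≤ q ∧ Nat.gcd p q = 1 ∧ x = (p : ℝ) / q}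

/-- The interval `I_n^ℱ(x)` of the Farey partition `F_n` containing `x`: the open interval
between the largest Farey point of order `n+1` below `x` and the smallest one above `x`. -/
def fareyInterval (n : ℕ) (x : ℝ) : Set ℝ :=
  Set.Ioo (sSup (fareyPts n ∩ Set.Iio x)) (sInf (fareyPts n ∩ Set.Ioi x))

/-- The partial quotient `a_{m+1}` of the continued fraction expansion of `x ∈ (0,1)`,
obtained from the Gauss map: `cfa x m = ⌊1 / T_G^m x⌋` where `T_G y = {1/y}`. -/
def cfa (x : ℝ) (m : ℕ) : ℕ := ⌊1 / ((fun y => Int.fract (1 / y))^[m] x)⌋₊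

/-- Numerators of the convergents of `x`, shifted by one: `cfp x (m+1) = p_m`, with
`p_{-1} = 1`, `p_0 = 0`, `p_{m+1} = a_{m+1} p_m + p_{m-1}`. -/
def cfp (x : ℝ) : ℕ → ℕ
  | 0 => 1
  | 1 => 0
  | m + 2 => cfa x m * cfp x (m + 1) + cfp x m

/-- Denominators of the convergents of `x`, shifted by one: `cfq x (m+1) = q_m`, with
`q_{-1} = 0`, `q_0 = 1`, `q_{m+1} = a_{m+1} q_m + q_{m-1}`. -/
def cfq (x : ℝ) : ℕ → ℕ
  | 0 => 0
  | 1 => 1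
  | m + 2 => cfa x m * cfq x (m + 1) + cfq x m

/-- The fundamental interval `I_n^{𝒞ℱ}(x)` of depth `n` of the continued fraction
expansion: the open interval with endpoints `p_n/q_n` and `(p_n+p_{n-1})/(q_n+q_{n-1})`,
the former being the left endpoint iff `n` is even. -/
def cfInterval (x : ℝ) (n : ℕ) : Set ℝ :=
  if Even n then
    Set.Ioo ((cfp x (n + 1) : ℝ) / (cfq x (n + 1) : ℝ))
      (((cfp x (n + 1) + cfp x n : ℕ) : ℝ) / ((cfq x (n + 1) + cfq x n : ℕ) : ℝ))
  else
    Set.Ioo (((cfp x (n + 1) + cfp x n : ℕ) : ℝ) / ((cfq x (n + 1) + cfq x n : ℕ) : ℝ))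
      ((cfp x (n + 1) : ℝ) / (cfq x (n + 1) : ℝ))

/-- The Lochs index `L_n(x, 𝒞ℱ, ℱ)` from the continued fraction sequence of partitions to
the Farey sequence of partitions. -/
def lochsCFtoF (x : ℝ) (n : ℕ) : ℕ :=
  sSup {ℓ : ℕ | cfInterval x n ⊆ fareyInterval ℓ x}

/-- The Lochs index `L_n(x, ℱ, 𝒞ℱ)` from the Farey sequence of partitions to the
continued fraction sequence of partitions. -/
def lochsFtoCF (x : ℝ) (n : ℕ) : ℕ :=
  sSup {ℓ : ℕ | fareyInterval n x ⊆ cfInterval x ℓ}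

/-!
For irrational `x`, the Farey interval of order `N` around `x` lies in the continued fraction
interval of depth `n` exactly when `q_n + q_{n-1} ≤ N + 1`, so the Lochs index is obtained by
inverting the growth of the mediant denominators `q_n + q_{n-1}`. The identity
`q_n + T^n x * q_{n-1} = ∏_{i < n} (T^i x)⁻¹` for the Gauss map `T` shows that
`log (q_n + q_{n-1})` is within `log 2` of the Birkhoff sum of `-log` along `T`. The Gauss measure
is `T`-invariant, and ergodic because the inverse branches of `T^n` have bounded distortion: an
invariant set of positive measure fills a fixed proportion of arbitrarily small balls around
almost every point, hence has full measure by Lebesgue density. Birkhoff's theorem then gives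
`log (q_n + q_{n-1}) / n → ∫ -log x / ((1 + x) log 2) = π² / (12 log 2)` almost everywhere.
-/

open scoped Topology ENNReal

section PointwiseErgodicTheorem

variable {α : Type*} {T : α → α} {f : α → ℝ}

/-- The maximum of the Birkhoff sums `S_0 = 0, S_1, …, S_n` at the point `x`, as a monotone
function of `n`. -/
def birkhoffMax (T : α → α) (f : α → ℝ) (x : α) : ℕ →o ℝ :=
  partialSups fun n => birkhoffSum T f n x

lemma birkhoffMax_nonneg (T : α → α) (f : α → ℝ) (x : α) (n : ℕ) : 0 ≤ birkhoffMax T f x n :=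
  le_partialSups_of_le (fun n => birkhoffSum T f n x) n.zero_le

lemma birkhoffMax_succ (T : α → α) (f : α → ℝ) (x : α) (n : ℕ) :
    birkhoffMax T f x (n + 1) = max 0 (f x + birkhoffMax T f (T x) n) := by
  have hmax_succ (x : α) (n : ℕ) :
      birkhoffMax T f x (n + 1) = max (birkhoffMax T f x n) (birkhoffSum T f (n + 1) x) :=
    partialSups_add_one _ n
  induction n with
  | zero => rw [hmax_succ]; simp [birkhoffMax]
  | succ n ih =>
    rw [hmax_succ x (n + 1), ih, hmax_succ (T x), birkhoffSum_succ', max_assoc, max_add_add_left]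

lemma birkhoffMax_succ_sub (T : α → α) (f : α → ℝ) (x : α) (n : ℕ) :
    birkhoffMax T f x (n + 1) - birkhoffMax T f (T x) n = max (-birkhoffMax T f (T x) n) (f x) := by
  rw [birkhoffMax_succ, ← max_sub_sub_right, zero_sub, add_sub_cancel_right]

lemma bddAbove_range_birkhoffMax {x : α} :
    BddAbove (range (birkhoffMax T f x)) ↔ BddAbove (range fun n => birkhoffSum T f n x) :=
  bddAbove_range_partialSups

lemma bddAbove_range_birkhoffSum_apply {x : α} :
    BddAbove (range fun n => birkhoffSum T f n (T x)) ↔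
      BddAbove (range fun n => birkhoffSum T f n x) := by
  simp only [bddAbove_def, forall_mem_range]
  constructor
  · rintro ⟨B, hB⟩
    refine ⟨max 0 (f x + B), fun n => ?_⟩
    cases n with
    | zero => simp
    | succ n => rw [birkhoffSum_succ']; exact le_max_of_le_right (by linarith [hB n])
  · rintro ⟨B, hB⟩
    refine ⟨B - f x, fun n => ?_⟩
    linarith [hB (n + 1), birkhoffSum_succ' T f n x]

variable [MeasurableSpace α] {μ : Measure α}

lemma integrable_birkhoffSum (hT : MeasurePreserving T μ μ) (hf : Integrable f μ) (n : ℕ) :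
    Integrable (birkhoffSum T f n) μ :=
  integrable_finsetSum _ fun k _ => (hT.iterate k).integrable_comp_of_integrable hf

lemma integrable_birkhoffMax (hT : MeasurePreserving T μ μ) (hf : Integrable f μ) (n : ℕ) :
    Integrable (birkhoffMax T f · n) μ := by
  induction n with
  | zero => simp [birkhoffMax]
  | succ n ih =>
    simp only [birkhoffMax_succ]
    exact (integrable_zero _ _ _).sup (hf.add (hT.integrable_comp_of_integrable ih))

lemma integral_max_neg_birkhoffMax_nonneg (hT : MeasurePreserving T μ μ) (hf : Integrable f μ)
    (n : ℕ) : 0 ≤ ∫ x, max (-birkhoffMax T f (T x) n) (f x) ∂μ := by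
  have hM := integrable_birkhoffMax hT hf
  have hMTi : Integrable (fun x => birkhoffMax T f (T x) n) μ :=
    hT.integrable_comp_of_integrable (hM n)
  have hMT : ∫ x, birkhoffMax T f (T x) n ∂μ = ∫ x, birkhoffMax T f x n ∂μ := by
    have hmap := integral_map hT.aemeasurable (f := (birkhoffMax T f · n))
      (by simpa only [hT.map_eq] using (hM n).aestronglyMeasurable)
    rw [hT.map_eq] at hmap
    exact hmap.symm
  calc 0 ≤ ∫ x, birkhoffMax T f x (n + 1) ∂μ - ∫ x, birkhoffMax T f x n ∂μ :=
        sub_nonneg.2 <| integral_mono (hM n) (hM (n + 1)) fun x =>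
          (birkhoffMax T f x).monotone n.le_succ
    _ = ∫ x, birkhoffMax T f x (n + 1) - birkhoffMax T f (T x) n ∂μ := by
        rw [integral_sub (hM (n + 1)) hMTi, hMT]
    _ = ∫ x, max (-birkhoffMax T f (T x) n) (f x) ∂μ := by simp only [birkhoffMax_succ_sub]

-- If the maxima `M_n` of the Birkhoff sums diverge, then `M_{n+1} x - M_n (T x)` tends to `f x`,
-- while its integral is nonnegative by invariance of `μ`.
lemma integral_nonneg_of_ae_not_bddAbove_birkhoffSum (hT : MeasurePreserving T μ μ)
    (hf : Integrable f μ) (h : ∀ᵐ x ∂μ, ¬ BddAbove (range fun n => birkhoffSum T f n x)) :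
    0 ≤ ∫ x, f x ∂μ := by
  refine ge_of_tendsto' (tendsto_integral_of_dominated_convergence (fun x => |f x|)
    (fun n => ?_) hf.abs (fun n => .of_forall fun x => ?_) ?_)
    (integral_max_neg_birkhoffMax_nonneg hT hf)
  · exact ((hT.integrable_comp_of_integrable (integrable_birkhoffMax hT hf n)).neg.sup
      hf).aestronglyMeasurable
  · have hM := birkhoffMax_nonneg T f (T x) n
    exact abs_le.2 ⟨(neg_abs_le _).trans (le_max_right _ _),
      max_le ((neg_nonpos.2 hM).trans (abs_nonneg _)) (le_abs_self _)⟩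
  · filter_upwards [h] with x hx
    have hdiv : Tendsto (birkhoffMax T f (T x)) atTop atTop := by
      refine tendsto_atTop_atTop_of_monotone' (birkhoffMax T f (T x)).monotone ?_
      rwa [bddAbove_range_birkhoffMax, bddAbove_range_birkhoffSum_apply]
    refine tendsto_const_nhds.congr' ?_
    filter_upwards [hdiv.eventually_ge_atTop (-f x)] with n hn
    exact (max_eq_right (neg_le.1 hn)).symm

lemma nullMeasurableSet_bddAbove_birkhoffSum (hT : MeasurePreserving T μ μ)
    (hf : Integrable f μ) :
    NullMeasurableSet {x | BddAbove (range fun n => birkhoffSum T f n x)} μ := by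
  have hS := fun n => (integrable_birkhoffSum hT hf n).aestronglyMeasurable.aemeasurable
  refine (measurableSet_bddAbove_range fun n => (hS n).measurable_mk).nullMeasurableSet.congr ?_
  refine eventuallyEq_set.2 ?_
  filter_upwards [ae_all_iff.2 fun n => (hS n).ae_eq_mk] with x hx
  simp only [hx]

lemma ae_bddAbove_birkhoffSum (hT : Ergodic T μ) (hf : Integrable f μ) (hneg : ∫ x, f x ∂μ < 0) :
    ∀ᵐ x ∂μ, BddAbove (range fun n => birkhoffSum T f n x) := by
  have hmp := hT.toMeasurePreserving
  refine (hT.quasiErgodic.ae_mem_or_ae_notMem₀ (nullMeasurableSet_bddAbove_birkhoffSum hmp hf)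
    (.of_forall fun x => propext bddAbove_range_birkhoffSum_apply)).resolve_right fun h => ?_
  exact hneg.not_ge (integral_nonneg_of_ae_not_bddAbove_birkhoffSum hmp hf h)

variable [IsProbabilityMeasure μ]

lemma ae_eventually_birkhoffAverage_lt (hT : Ergodic T μ) (hf : Integrable f μ) {c : ℝ}
    (hc : ∫ x, f x ∂μ < c) : ∀ᵐ x ∂μ, ∀ᶠ n in atTop, birkhoffAverage ℝ T f n x < c := by
  obtain ⟨d, hd, hdc⟩ := exists_between hc
  have hneg : ∫ x, f x - d ∂μ < 0 := by
    simpa [integral_sub hf (integrable_const d)] using hd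
  filter_upwards [ae_bddAbove_birkhoffSum hT (hf.sub (integrable_const d)) hneg]
    with x ⟨B, hB⟩
  have hlim : Tendsto (fun n : ℕ => B / n + d) atTop (𝓝 d) := by
    simpa using (tendsto_const_div_atTop_nhds_zero_nat B).add_const d
  filter_upwards [hlim.eventually_lt_const hdc, eventually_gt_atTop 0] with n hn hpos
  refine lt_of_le_of_lt ?_ hn
  have hsum : birkhoffSum T f n x - n * d ≤ B := by
    simpa [birkhoffSum] using hB (mem_range_self n)
  have hpos' : (0 : ℝ) < n := by exact_mod_cast hpos
  rw [birkhoffAverage, smul_eq_mul, inv_mul_le_iff₀ hpos']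
  field_simp
  linarith

theorem ae_tendsto_birkhoffAverage (hT : Ergodic T μ) (hf : Integrable f μ) :
    ∀ᵐ x ∂μ, Tendsto (fun n => birkhoffAverage ℝ T f n x) atTop (𝓝 (∫ y, f y ∂μ)) := by
  have hlt (g : α → ℝ) (hg : Integrable g μ) :
      ∀ᵐ x ∂μ, ∀ c : ℚ, ∫ y, g y ∂μ < c → ∀ᶠ n in atTop, birkhoffAverage ℝ T g n x < c :=
    ae_all_iff.2 fun c => eventually_imp_distrib_left.2 fun hc =>
      ae_eventually_birkhoffAverage_lt hT hg hc
  filter_upwards [hlt f hf, hlt (-f) hf.neg] with x hup hlow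
  refine tendsto_order.2 ⟨fun a ha => ?_, fun a ha => ?_⟩
  · obtain ⟨c, hac, hc⟩ := exists_rat_btwn ha
    have hc' : ∫ y, (-f) y ∂μ < ((-c : ℚ) : ℝ) := by
      simpa [integral_neg] using hc
    filter_upwards [hlow _ hc'] with n hn
    have hneg : birkhoffAverage ℝ T (-f) n x = -birkhoffAverage ℝ T f n x :=
      congrFun (congrFun birkhoffAverage_neg n) x
    push_cast at hn
    linarith
  · obtain ⟨c, hc, hca⟩ := exists_rat_btwn ha
    exact (hup c hc).mono fun n hn => hn.trans hca

end PointwiseErgodicTheorem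

section ContinuedFractions

/-- The Gauss map `y ↦ {1/y}`, which shifts continued fraction expansions. At the junk value
`1/0 = 0` it sends `0` to `0`. -/
def gaussMap (y : ℝ) : ℝ := Int.fract (1 / y)

/-- The irrationals of the unit interval: the points whose continued fraction expansion is
infinite. -/
def unitIrrationals : Set ℝ := {x | Irrational x} ∩ Ioo 0 1

lemma mapsTo_gaussMap_unitIrrationals : MapsTo gaussMap unitIrrationals unitIrrationals := by
  rintro x ⟨hirr, -⟩
  have hfract : Irrational (gaussMap x) := by
    rw [gaussMap, one_div, Int.fract]
    exact hirr.inv.sub_intCast _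
  exact ⟨hfract, (Int.fract_nonneg _).lt_of_ne' hfract.ne_zero, Int.fract_lt_one _⟩

lemma iterate_gaussMap_mem_unitIrrationals {x : ℝ} (hx : x ∈ unitIrrationals) (n : ℕ) :
    gaussMap^[n] x ∈ unitIrrationals :=
  mapsTo_gaussMap_unitIrrationals.iterate n hx

lemma iterate_gaussMap_mem_Ioo {x : ℝ} (hx : x ∈ unitIrrationals) (n : ℕ) :
    gaussMap^[n] x ∈ Ioo 0 1 :=
  (iterate_gaussMap_mem_unitIrrationals hx n).2

lemma one_div_iterate_gaussMap {x : ℝ} (hx : x ∈ unitIrrationals) (n : ℕ) :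
    1 / gaussMap^[n] x = cfa x n + gaussMap^[n + 1] x := by
  have hpos := (iterate_gaussMap_mem_Ioo hx n).1
  have hcfa : (cfa x n : ℝ) = ⌊1 / gaussMap^[n] x⌋ :=
    natCast_floor_eq_intCast_floor (one_div_pos.2 hpos).le
  rw [Function.iterate_succ_apply', hcfa]
  exact (Int.floor_add_fract _).symm

lemma cfa_pos {x : ℝ} (hx : x ∈ unitIrrationals) (n : ℕ) : 0 < cfa x n := by
  obtain ⟨hpos, hlt⟩ := iterate_gaussMap_mem_Ioo hx n
  exact Nat.floor_pos.2 ((one_le_div hpos).2 hlt.le)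

lemma cfq_succ_pos {x : ℝ} (hx : x ∈ unitIrrationals) (n : ℕ) : 0 < cfq x (n + 1) := by
  induction n with
  | zero => exact one_pos
  | succ n ih => exact Nat.add_pos_left (Nat.mul_pos (cfa_pos hx n) ih) _

lemma cfq_le_cfq_succ {x : ℝ} (hx : x ∈ unitIrrationals) (n : ℕ) : cfq x n ≤ cfq x (n + 1) := by
  cases n with
  | zero => exact zero_le_one
  | succ n =>
    calc cfq x (n + 1) ≤ cfa x n * cfq x (n + 1) := Nat.le_mul_of_pos_left _ (cfa_pos hx n)
      _ ≤ cfq x (n + 2) := Nat.le_add_right _ _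

lemma cfp_succ_le_cfq_succ {x : ℝ} (hx : x ∈ unitIrrationals) (n : ℕ) :
    cfp x (n + 1) ≤ cfq x (n + 1) ∧ cfp x (n + 2) ≤ cfq x (n + 2) := by
  induction n with
  | zero => simpa [cfp, cfq, Nat.one_le_iff_ne_zero] using (cfa_pos hx 0).ne'
  | succ n ih => exact ⟨ih.2, Nat.add_le_add (Nat.mul_le_mul_left _ ih.2) ih.1⟩

lemma cfp_mul_cfq_sub (x : ℝ) (n : ℕ) :
    (cfp x n : ℤ) * cfq x (n + 1) - cfp x (n + 1) * cfq x n = (-1) ^ n := by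
  induction n with
  | zero => simp [cfp, cfq]
  | succ n ih =>
    simp only [cfp, cfq, pow_succ, ← ih]
    push_cast
    ring

/-- The denominator `q_n + t q_{n-1}` of the inverse branch `cfBranch x n`. -/
def cfDen (x : ℝ) (n : ℕ) (t : ℝ) : ℝ := cfq x (n + 1) + t * cfq x n

/-- The inverse branch `t ↦ (p_n + t p_{n-1}) / (q_n + t q_{n-1})` of the `n`-th iterate of the
Gauss map whose image contains `x`. -/
def cfBranch (x : ℝ) (n : ℕ) (t : ℝ) : ℝ := (cfp x (n + 1) + t * cfp x n) / cfDen x n t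

/-- The denominator `q_n + q_{n-1}` of the mediant of the last two convergents, which is the
endpoint of `cfInterval x n` other than `p_n / q_n`. -/
def mediantDen (x : ℝ) (n : ℕ) : ℕ := cfq x (n + 1) + cfq x n

lemma cfDen_zero (x : ℝ) (n : ℕ) : cfDen x n 0 = cfq x (n + 1) := by simp [cfDen]

lemma cfDen_one (x : ℝ) (n : ℕ) : cfDen x n 1 = mediantDen x n := by simp [cfDen, mediantDen]

lemma cfDen_le_cfDen (x : ℝ) (n : ℕ) {s t : ℝ} (hst : s ≤ t) : cfDen x n s ≤ cfDen x n t := by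
  unfold cfDen
  gcongr

lemma cfDen_pos {x : ℝ} (hx : x ∈ unitIrrationals) (n : ℕ) {t : ℝ} (ht : 0 ≤ t) :
    0 < cfDen x n t := by
  refine lt_of_lt_of_le ?_ (cfDen_le_cfDen x n ht)
  rw [cfDen_zero]
  exact_mod_cast cfq_succ_pos hx n

lemma mediantDen_le_two_mul_cfq {x : ℝ} (hx : x ∈ unitIrrationals) (n : ℕ) :
    mediantDen x n ≤ 2 * cfq x (n + 1) := by
  linarith [cfq_le_cfq_succ hx n, mediantDen.eq_def x n]

lemma strictMono_mediantDen {x : ℝ} (hx : x ∈ unitIrrationals) : StrictMono (mediantDen x) := by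
  refine strictMono_nat_of_lt_succ fun n => ?_
  have hle : cfq x (n + 1) + cfq x n ≤ cfq x (n + 2) :=
    Nat.add_le_add_right (Nat.le_mul_of_pos_left _ (cfa_pos hx n)) _
  exact hle.trans_lt (Nat.lt_add_of_pos_right (cfq_succ_pos hx n))

lemma tendsto_cfq_atTop {x : ℝ} (hx : x ∈ unitIrrationals) :
    Tendsto (fun n => cfq x (n + 1)) atTop atTop := by
  refine tendsto_atTop_mono (fun n => ?_) (Nat.tendsto_div_const_atTop two_ne_zero)
  exact Nat.div_le_of_le_mul
    (((strictMono_mediantDen hx).le_apply).trans (mediantDen_le_two_mul_cfq hx n))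

lemma cfBranch_succ {x : ℝ} (hx : x ∈ unitIrrationals) (n : ℕ) {t : ℝ} (ht : 0 ≤ t) :
    cfBranch x (n + 1) t = cfBranch x n (1 / (cfa x n + t)) := by
  have hat : (0 : ℝ) < cfa x n + t := add_pos_of_pos_of_nonneg (mod_cast cfa_pos hx n) ht
  have hden := cfDen_pos hx (n + 1) ht
  have hden' := cfDen_pos hx n (one_div_nonneg.2 hat.le)
  rw [cfBranch, cfBranch, div_eq_div_iff hden.ne' hden'.ne']
  simp only [cfDen, cfp, cfq]
  push_cast
  field_simp
  ring

lemma cfBranch_iterate_gaussMap {x : ℝ} (hx : x ∈ unitIrrationals) (n : ℕ) :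
    cfBranch x n (gaussMap^[n] x) = x := by
  induction n with
  | zero => simp [cfBranch, cfDen, cfp, cfq]
  | succ n ih =>
    rw [cfBranch_succ hx n (iterate_gaussMap_mem_Ioo hx _).1.le, ← one_div_iterate_gaussMap hx n,
      one_div_one_div, ih]

lemma iterate_gaussMap_cfBranch {x : ℝ} (hx : x ∈ unitIrrationals) (n : ℕ) {t : ℝ}
    (ht : t ∈ Ioo 0 1) : gaussMap^[n] (cfBranch x n t) = t := by
  induction n generalizing t with
  | zero => simp [cfBranch, cfDen, cfp, cfq]
  | succ n ih =>
    have ha : (1 : ℝ) ≤ cfa x n := mod_cast cfa_pos hx n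
    have hpos : 0 < cfa x n + t := by linarith [ht.1]
    rw [cfBranch_succ hx n ht.1.le, Function.iterate_succ_apply',
      ih ⟨one_div_pos.2 hpos, (div_lt_one hpos).2 (by linarith [ht.1])⟩, gaussMap, one_div_one_div,
      Int.fract_natCast_add]
    exact Int.fract_eq_self.2 ⟨ht.1.le, ht.2⟩

lemma cfBranch_sub_cfBranch {x : ℝ} (hx : x ∈ unitIrrationals) (n : ℕ) {s t : ℝ} (hs : 0 ≤ s)
    (ht : 0 ≤ t) :
    cfBranch x n t - cfBranch x n s = (-1) ^ n * ((t - s) / (cfDen x n t * cfDen x n s)) := by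
  have hdet : (cfp x n : ℝ) * cfq x (n + 1) - cfp x (n + 1) * cfq x n = (-1) ^ n :=
    mod_cast cfp_mul_cfq_sub x n
  rw [cfBranch, cfBranch, div_sub_div _ _ (cfDen_pos hx n ht).ne' (cfDen_pos hx n hs).ne',
    ← mul_div_assoc, ← hdet]
  congr 1
  simp only [cfDen]
  ring

lemma abs_cfBranch_sub_cfBranch {x : ℝ} (hx : x ∈ unitIrrationals) (n : ℕ) {s t : ℝ}
    (hs : 0 ≤ s) (ht : 0 ≤ t) :
    |cfBranch x n t - cfBranch x n s| = |t - s| / (cfDen x n t * cfDen x n s) := by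
  have hden := mul_pos (cfDen_pos hx n ht) (cfDen_pos hx n hs)
  rw [cfBranch_sub_cfBranch hx n hs ht, abs_mul, abs_neg_one_pow, one_mul, abs_div,
    abs_of_pos hden]

lemma injOn_cfBranch {x : ℝ} (hx : x ∈ unitIrrationals) (n : ℕ) :
    InjOn (cfBranch x n) (Ici 0) := fun s hs t ht hst => by
  have hden := mul_pos (cfDen_pos hx n hs) (cfDen_pos hx n ht)
  have habs := abs_cfBranch_sub_cfBranch hx n ht hs
  rw [hst, sub_self, abs_zero, eq_comm, div_eq_zero_iff, or_iff_left hden.ne', abs_eq_zero] at habs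
  exact sub_eq_zero.1 habs

lemma hasDerivAt_cfBranch {x : ℝ} (hx : x ∈ unitIrrationals) (n : ℕ) {t : ℝ} (ht : 0 ≤ t) :
    HasDerivAt (cfBranch x n) ((-1) ^ n / cfDen x n t ^ 2) t := by
  have hnum : HasDerivAt (fun t : ℝ => cfp x (n + 1) + t * cfp x n) (cfp x n) t :=
    (hasDerivAt_mul_const (cfp x n : ℝ)).const_add _
  have hden : HasDerivAt (cfDen x n) (cfq x n) t :=
    (hasDerivAt_mul_const (cfq x n : ℝ)).const_add _
  refine (hnum.div hden (cfDen_pos hx n ht).ne').congr_deriv ?_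
  have hdet : (cfp x n : ℝ) * cfq x (n + 1) - cfp x (n + 1) * cfq x n = (-1) ^ n :=
    mod_cast cfp_mul_cfq_sub x n
  rw [← hdet, cfDen]
  ring

lemma log_cfDen_iterate_gaussMap {x : ℝ} (hx : x ∈ unitIrrationals) (n : ℕ) :
    Real.log (cfDen x n (gaussMap^[n] x)) = birkhoffSum gaussMap (fun y => -Real.log y) n x := by
  induction n with
  | zero => simp [cfDen, cfq]
  | succ n ih =>
    have hpos := (iterate_gaussMap_mem_Ioo hx n).1
    have hden : cfDen x (n + 1) (gaussMap^[n + 1] x) =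
        cfDen x n (gaussMap^[n] x) * (gaussMap^[n] x)⁻¹ := by
      rw [← sub_eq_of_eq_add' (one_div_iterate_gaussMap hx n)]
      simp only [cfDen, cfq]
      push_cast
      field_simp
      ring
    rw [birkhoffSum_succ, ← ih, hden,
      Real.log_mul (cfDen_pos hx n hpos.le).ne' (inv_pos.2 hpos).ne', Real.log_inv]

lemma birkhoffSum_le_log_mediantDen {x : ℝ} (hx : x ∈ unitIrrationals) (n : ℕ) :
    birkhoffSum gaussMap (fun y => -Real.log y) n x ≤ Real.log (mediantDen x n) := by
  obtain ⟨hpos, hlt⟩ := iterate_gaussMap_mem_Ioo hx n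
  rw [← log_cfDen_iterate_gaussMap hx, ← cfDen_one]
  exact Real.log_le_log (cfDen_pos hx n hpos.le) (cfDen_le_cfDen x n hlt.le)

lemma log_mediantDen_le {x : ℝ} (hx : x ∈ unitIrrationals) (n : ℕ) :
    Real.log (mediantDen x n) ≤
      birkhoffSum gaussMap (fun y => -Real.log y) n x + Real.log 2 := by
  have hpos := (iterate_gaussMap_mem_Ioo hx n).1
  rw [← log_cfDen_iterate_gaussMap hx, ← Real.log_mul (cfDen_pos hx n hpos.le).ne' two_ne_zero]
  refine Real.log_le_log (cfDen_one x n ▸ cfDen_pos hx n zero_le_one) ?_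
  calc (mediantDen x n : ℝ) ≤ 2 * cfq x (n + 1) := mod_cast mediantDen_le_two_mul_cfq hx n
    _ = cfDen x n 0 * 2 := by rw [cfDen_zero, mul_comm]
    _ ≤ cfDen x n (gaussMap^[n] x) * 2 := by gcongr; exact cfDen_le_cfDen x n hpos.le

lemma tendsto_log_mediantDen_div {x c : ℝ} (hx : x ∈ unitIrrationals)
    (h : Tendsto (fun n => birkhoffAverage ℝ gaussMap (fun y => -Real.log y) n x) atTop (𝓝 c)) :
    Tendsto (fun n : ℕ => Real.log (mediantDen x n) / n) atTop (𝓝 c) := by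
  have hup : Tendsto (fun n : ℕ => birkhoffAverage ℝ gaussMap (fun y => -Real.log y) n x +
      Real.log 2 / n) atTop (𝓝 c) := by
    simpa using h.add (tendsto_const_div_atTop_nhds_zero_nat (Real.log 2))
  simp only [birkhoffAverage, smul_eq_mul, inv_mul_eq_div, ← add_div] at h hup
  refine tendsto_of_tendsto_of_tendsto_of_le_of_le h hup (fun n => ?_) fun n => ?_
  · exact div_le_div_of_nonneg_right (birkhoffSum_le_log_mediantDen hx n) n.cast_nonneg
  · exact div_le_div_of_nonneg_right (log_mediantDen_le hx n) n.cast_nonneg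

end ContinuedFractions

section FareyComparison

lemma one_div_mul_le_abs_div_sub_div {a c : ℤ} {b d : ℕ} (hb : 0 < b) (hd : 0 < d)
    (h : (a / b : ℝ) ≠ c / d) : (1 : ℝ) / (b * d) ≤ |(a / b : ℝ) - c / d| := by
  have hb' : (0 : ℝ) < b := Nat.cast_pos.2 hb
  have hd' : (0 : ℝ) < d := Nat.cast_pos.2 hd
  have hne : a * d - b * c ≠ 0 := fun h0 => h <|
    (div_eq_div_iff hb'.ne' hd'.ne').2 (by rw [mul_comm (c : ℝ)]; exact_mod_cast sub_eq_zero.1 h0)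
  have hone : (1 : ℝ) ≤ |(a * d - b * c : ℝ)| := mod_cast Int.one_le_abs hne
  rw [div_sub_div _ _ hb'.ne' hd'.ne', abs_div, abs_of_pos (mul_pos hb' hd')]
  gcongr

lemma isCoprime_of_isUnit_mul_sub_mul {R : Type*} [CommRing R] {a b c d : R}
    (h : IsUnit (a * d - b * c)) : IsCoprime a b := by
  obtain ⟨e, he⟩ := h.exists_left_inv
  exact ⟨e * d, -(e * c), by linear_combination he⟩

lemma strictMono_apply_sSup_le_and_lt {M : ℕ → ℕ} (hM : StrictMono M) {N : ℕ} (h0 : M 0 ≤ N) :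
    M (sSup {ℓ | M ℓ ≤ N}) ≤ N ∧ N < M (sSup {ℓ | M ℓ ≤ N} + 1) := by
  have hbdd : BddAbove {ℓ | M ℓ ≤ N} := ⟨N, fun ℓ hℓ => hM.le_apply.trans hℓ⟩
  exact ⟨Nat.sSup_mem ⟨0, h0⟩ hbdd, lt_of_not_ge fun h => (Nat.lt_succ_self _).not_ge
    (le_csSup hbdd h)⟩

lemma finite_fareyPts (N : ℕ) : (fareyPts N).Finite := by
  refine (((finite_Iic (N + 1)).prod (finite_Iic (N + 1))).image
    fun z : ℕ × ℕ => (z.1 / z.2 : ℝ)).subset ?_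
  rintro _ ⟨p, q, -, hq, hpq, -, rfl⟩
  exact ⟨(p, q), ⟨hpq.trans hq, hq⟩, rfl⟩

lemma zero_mem_fareyPts (N : ℕ) : (0 : ℝ) ∈ fareyPts N :=
  ⟨0, 1, one_ne_zero, N.succ_pos, zero_le_one, Nat.gcd_one_right 0, by simp⟩

lemma one_mem_fareyPts (N : ℕ) : (1 : ℝ) ∈ fareyPts N :=
  ⟨1, 1, one_ne_zero, N.succ_pos, le_rfl, Nat.gcd_one_right 1, by simp⟩

lemma sSup_fareyPts_inter_Iio_mem (N : ℕ) {x : ℝ} (hx : 0 < x) :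
    sSup (fareyPts N ∩ Iio x) ∈ fareyPts N ∩ Iio x :=
  Nonempty.csSup_mem ⟨0, zero_mem_fareyPts N, hx⟩ ((finite_fareyPts N).inter_of_left _)

lemma sInf_fareyPts_inter_Ioi_mem (N : ℕ) {x : ℝ} (hx : x < 1) :
    sInf (fareyPts N ∩ Ioi x) ∈ fareyPts N ∩ Ioi x :=
  Nonempty.csInf_mem ⟨1, one_mem_fareyPts N, hx⟩ ((finite_fareyPts N).inter_of_left _)

lemma fareyInterval_subset_uIoo {N : ℕ} {x a b : ℝ} (ha : a ∈ fareyPts N) (hb : b ∈ fareyPts N)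
    (hx : x ∈ uIoo a b) : fareyInterval N x ⊆ uIoo a b := by
  wlog hab : a ≤ b generalizing a b
  · rw [uIoo_comm] at hx ⊢
    exact this hb ha hx (le_of_not_ge hab)
  rw [uIoo_of_le hab] at hx ⊢
  exact Ioo_subset_Ioo (le_csSup (bddAbove_Iio.mono inter_subset_right) ⟨ha, hx.1⟩)
    (csInf_le (bddBelow_Ioi.mono inter_subset_right) ⟨hb, hx.2⟩)

lemma cfBranch_zero (x : ℝ) (n : ℕ) : cfBranch x n 0 = cfp x (n + 1) / cfq x (n + 1) := by
  simp [cfBranch, cfDen]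

lemma cfInterval_eq_uIoo {x : ℝ} (hx : x ∈ unitIrrationals) (n : ℕ) :
    cfInterval x n = uIoo (cfBranch x n 0) (cfBranch x n 1) := by
  have hone : cfBranch x n 1 = ((cfp x (n + 1) + cfp x n : ℕ) : ℝ) / mediantDen x n := by
    simp [cfBranch, cfDen_one]
  have hsub := cfBranch_sub_cfBranch hx n le_rfl zero_le_one
  have hpos : 0 < (1 - 0) / (cfDen x n 1 * cfDen x n 0) :=
    div_pos (by norm_num) (mul_pos (cfDen_pos hx n zero_le_one) (cfDen_pos hx n le_rfl))
  rw [cfInterval, ← mediantDen, ← hone, ← cfBranch_zero]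
  split_ifs with hn
  · rw [hn.neg_one_pow, one_mul] at hsub
    rw [uIoo_of_lt (by linarith)]
  · rw [(Nat.not_even_iff_odd.1 hn).neg_one_pow, neg_one_mul] at hsub
    rw [uIoo_of_gt (by linarith)]

lemma mem_cfInterval {x : ℝ} (hx : x ∈ unitIrrationals) (n : ℕ) : x ∈ cfInterval x n := by
  obtain ⟨hpos, hlt⟩ := iterate_gaussMap_mem_Ioo hx n
  have hden {t : ℝ} (ht : 0 ≤ t) := cfDen_pos hx n ht
  have hleft := cfBranch_sub_cfBranch hx n le_rfl hpos.le
  have hright := cfBranch_sub_cfBranch hx n hpos.le zero_le_one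
  have hleft_pos := div_pos (sub_pos.2 hpos) (mul_pos (hden hpos.le) (hden le_rfl))
  have hright_pos := div_pos (sub_pos.2 hlt) (mul_pos (hden zero_le_one) (hden hpos.le))
  rw [cfBranch_iterate_gaussMap hx] at hleft hright
  rw [cfInterval_eq_uIoo hx]
  rcases neg_one_pow_eq_or ℝ n with h | h
  · rw [h, one_mul] at hleft hright
    exact mem_uIoo_of_lt (by linarith) (by linarith)
  · rw [h, neg_one_mul] at hleft hright
    exact mem_uIoo_of_gt (by linarith) (by linarith)

lemma cfBranch_natCast_mem_fareyPts {x : ℝ} (hx : x ∈ unitIrrationals) {n k N : ℕ} (hk : k ≤ 1)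
    (hN : cfq x (n + 1) + k * cfq x n ≤ N + 1) : cfBranch x n k ∈ fareyPts N := by
  have hdet : ((cfp x (n + 1) + k * cfp x n : ℕ) : ℤ) * cfq x n -
      ((cfq x (n + 1) + k * cfq x n : ℕ) : ℤ) * cfp x n = -(-1) ^ n := by
    push_cast
    linear_combination -cfp_mul_cfq_sub x n
  refine ⟨cfp x (n + 1) + k * cfp x n, cfq x (n + 1) + k * cfq x n,
    (Nat.add_pos_left (cfq_succ_pos hx n) _).ne', hN, ?_, ?_, by simp [cfBranch, cfDen]⟩
  · cases n with
    | zero => simpa [cfp, cfq] using hk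
    | succ n =>
      obtain ⟨hle, hle'⟩ := cfp_succ_le_cfq_succ hx n
      exact Nat.add_le_add hle' (Nat.mul_le_mul_left _ hle)
  · refine Nat.isCoprime_iff_coprime.1
      (isCoprime_of_isUnit_mul_sub_mul (c := (cfp x n : ℤ)) (d := (cfq x n : ℤ)) ?_)
    rw [hdet]
    exact (isUnit_neg_one.pow n).neg

lemma mediantDen_le_of_mem_uIcc {x y : ℝ} (hx : x ∈ unitIrrationals) {n N : ℕ}
    (hy : y ∈ fareyPts N) (hmem : y ∈ uIcc (cfBranch x n 0) (cfBranch x n 1))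
    (hne : y ≠ cfBranch x n 0) : mediantDen x n ≤ N + 1 := by
  obtain ⟨p, q, hq, hqN, -, -, rfl⟩ := hy
  have hq' : (0 : ℝ) < q := Nat.cast_pos.2 hq.bot_lt
  have hqn : (0 : ℝ) < cfq x (n + 1) := Nat.cast_pos.2 (cfq_succ_pos hx n)
  have hM : (0 : ℝ) < mediantDen x n := cfDen_one x n ▸ cfDen_pos hx n zero_le_one
  have hsep : (1 : ℝ) / (q * cfq x (n + 1)) ≤ 1 / (mediantDen x n * cfq x (n + 1)) :=
    calc (1 : ℝ) / (q * cfq x (n + 1)) ≤ |(p / q : ℝ) - cfBranch x n 0| := by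
          rw [cfBranch_zero] at hne ⊢
          simpa only [Int.cast_natCast] using one_div_mul_le_abs_div_sub_div (a := p)
            (c := cfp x (n + 1)) hq.bot_lt (cfq_succ_pos hx n) hne
      _ ≤ |cfBranch x n 1 - cfBranch x n 0| := abs_sub_left_of_mem_uIcc hmem
      _ = 1 / (mediantDen x n * cfq x (n + 1)) := by
          rw [abs_cfBranch_sub_cfBranch hx n le_rfl zero_le_one, cfDen_one, cfDen_zero, sub_zero,
            abs_one]
  have hle : (mediantDen x n : ℝ) ≤ q :=
    le_of_mul_le_mul_right ((one_div_le_one_div (by positivity) (by positivity)).1 hsep) hqn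
  exact (mod_cast hle : mediantDen x n ≤ q).trans hqN

-- Two fractions in the closure of `cfInterval x n` cannot both be `p_n / q_n`, and any other one
-- has denominator at least that of the mediant.
lemma fareyInterval_subset_cfInterval_iff {x : ℝ} (hx : x ∈ unitIrrationals) {n N : ℕ} :
    fareyInterval N x ⊆ cfInterval x n ↔ mediantDen x n ≤ N + 1 := by
  have hmem := mem_cfInterval hx n
  rw [cfInterval_eq_uIoo hx] at hmem ⊢
  constructor
  · intro hsub
    obtain ⟨hl, hlx⟩ := sSup_fareyPts_inter_Iio_mem N hx.2.1
    obtain ⟨hr, hxr⟩ := sInf_fareyPts_inter_Ioi_mem N hx.2.2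
    obtain ⟨hle_l, hr_le⟩ := (Ioo_subset_Ioo_iff (hlx.trans hxr)).1 hsub
    by_cases hl0 : sSup (fareyPts N ∩ Iio x) = cfBranch x n 0
    · refine mediantDen_le_of_mem_uIcc hx hr ⟨hle_l.trans (hlx.trans hxr).le, hr_le⟩ ?_
      exact hl0 ▸ (hlx.trans hxr).ne'
    · exact mediantDen_le_of_mem_uIcc hx hl ⟨hle_l, (hlx.trans hxr).le.trans hr_le⟩ hl0
  · intro hM
    have hzero := cfBranch_natCast_mem_fareyPts (N := N) hx zero_le_one
      (by simpa using (Nat.le_add_right _ _).trans hM)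
    have hone := cfBranch_natCast_mem_fareyPts (N := N) hx le_rfl (by simpa [mediantDen] using hM)
    exact fareyInterval_subset_uIoo (mod_cast hzero) (mod_cast hone) hmem

lemma mediantDen_lochsFtoCF {x : ℝ} (hx : x ∈ unitIrrationals) (N : ℕ) :
    mediantDen x (lochsFtoCF x N) ≤ N + 1 ∧ N + 1 < mediantDen x (lochsFtoCF x N + 1) := by
  simp only [lochsFtoCF, fareyInterval_subset_cfInterval_iff hx]
  exact strictMono_apply_sSup_le_and_lt (strictMono_mediantDen hx) (by simp [mediantDen, cfq])

lemma tendsto_log_add_one_div_log :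
    Tendsto (fun n : ℕ => Real.log (n + 1) / Real.log n) atTop (𝓝 1) := by
  have hlog : Tendsto (fun n : ℕ => Real.log n) atTop atTop :=
    Real.tendsto_log_atTop.comp tendsto_natCast_atTop_atTop
  have hdiff : Tendsto (fun n : ℕ => 1 + (Real.log (n + 1) - Real.log n) / Real.log n) atTop
      (𝓝 1) := by
    simpa using (Real.tendsto_log_nat_add_one_sub_log.div_atTop hlog).const_add 1
  refine hdiff.congr' ?_
  filter_upwards [hlog.eventually_gt_atTop 0] with n hn
  field_simp
  ring

lemma tendsto_div_of_tendsto_succ {u : ℕ → ℝ} {c : ℝ}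
    (hu : Tendsto (fun n : ℕ => u n / n) atTop (𝓝 c)) :
    Tendsto (fun n : ℕ => u (n + 1) / n) atTop (𝓝 c) := by
  have hratio : Tendsto (fun n : ℕ => ((n : ℝ) + 1) / n) atTop (𝓝 1) := by
    simpa using (tendsto_natCast_div_add_atTop (1 : ℝ)).inv₀ one_ne_zero
  have hmul := ((tendsto_add_atTop_iff_nat 1).2 hu).mul hratio
  rw [mul_one] at hmul
  refine hmul.congr fun n => ?_
  push_cast
  field_simp

lemma tendsto_atTop_of_lt_apply_succ {M L : ℕ → ℕ} (hM : Monotone M)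
    (hlt : ∀ n, n < M (L n + 1)) : Tendsto L atTop atTop := by
  refine tendsto_atTop.2 fun b => ?_
  filter_upwards [eventually_ge_atTop (M b)] with n hn
  exact Nat.lt_succ_iff.1 (hM.reflect_lt (hn.trans_lt (hlt n)))

lemma tendsto_div_log_of_tendsto_log_div {M L : ℕ → ℕ} {c : ℝ} (hM : StrictMono M)
    (hM0 : 0 < M 0) (hle : ∀ n, M (L n) ≤ n + 1) (hlt : ∀ n, n + 1 < M (L n + 1))
    (hc : c ≠ 0) (h : Tendsto (fun n : ℕ => Real.log (M n) / n) atTop (𝓝 c)) :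
    Tendsto (fun n : ℕ => (L n : ℝ) / Real.log n) atTop (𝓝 c⁻¹) := by
  have hL : Tendsto L atTop atTop :=
    tendsto_atTop_of_lt_apply_succ hM.monotone fun n => n.lt_succ_self.trans (hlt n)
  have hlog : Tendsto (fun n : ℕ => Real.log (n + 1) / L n) atTop (𝓝 c) := by
    refine tendsto_of_tendsto_of_tendsto_of_le_of_le (h.comp hL)
      ((tendsto_div_of_tendsto_succ (u := fun n => Real.log (M n)) h).comp hL)
      (fun n => ?_) fun n => ?_
    · have hpos : (0 : ℝ) < M (L n) := Nat.cast_pos.2 (hM0.trans_le (hM.monotone (Nat.zero_le _)))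
      exact div_le_div_of_nonneg_right (Real.log_le_log hpos (mod_cast hle n)) (L n).cast_nonneg
    · exact div_le_div_of_nonneg_right
        (Real.log_le_log (by positivity) (mod_cast (hlt n).le)) (L n).cast_nonneg
  have hmul := (hlog.inv₀ hc).mul tendsto_log_add_one_div_log
  rw [mul_one] at hmul
  refine hmul.congr' ?_
  filter_upwards [eventually_gt_atTop 0] with n hn
  have hpos : 0 < Real.log ((n : ℝ) + 1) := Real.log_pos (by simpa using hn)
  field_simp

lemma tendsto_lochsFtoCF_div_log {x c : ℝ} (hx : x ∈ unitIrrationals) (hc : c ≠ 0)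
    (h : Tendsto (fun n => birkhoffAverage ℝ gaussMap (fun y => -Real.log y) n x) atTop (𝓝 c)) :
    Tendsto (fun n : ℕ => (lochsFtoCF x n : ℝ) / Real.log n) atTop (𝓝 c⁻¹) :=
  tendsto_div_log_of_tendsto_log_div (strictMono_mediantDen hx) (by simp [mediantDen, cfq])
    (fun n => (mediantDen_lochsFtoCF hx n).1) (fun n => (mediantDen_lochsFtoCF hx n).2) hc
    (tendsto_log_mediantDen_div hx h)

end FareyComparison

section GaussMeasure

/-- The Gauss measure `dx / ((1 + x) log 2)` on the unit interval, the invariant probability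
measure of the Gauss map. -/
def gaussMeasure : Measure ℝ :=
  (volume.restrict (Ioc 0 1)).withDensity fun x => ENNReal.ofReal (1 / ((1 + x) * Real.log 2))

lemma ae_gaussMeasure : ae gaussMeasure = ae (volume.restrict (Ioc (0 : ℝ) 1)) := by
  refine le_antisymm (withDensity_absolutelyContinuous _ _).ae_le
    (withDensity_absolutelyContinuous' (by fun_prop) ?_).ae_le
  filter_upwards [ae_restrict_mem measurableSet_Ioc] with x hx
  have hx0 : 0 < 1 + x := by linarith [hx.1]
  exact (ENNReal.ofReal_pos.2 (by positivity)).ne'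

instance : NullSingletonClass gaussMeasure := by
  unfold gaussMeasure
  infer_instance

lemma gaussMeasure_inter_Ioc (s : Set ℝ) : gaussMeasure (s ∩ Ioc 0 1) = gaussMeasure s := by
  refine measure_inter_conull (mem_ae_iff.1 ?_)
  rw [ae_gaussMeasure]
  exact ae_restrict_mem measurableSet_Ioc

lemma continuousOn_gaussDensity {a b : ℝ} (ha : 0 ≤ a) :
    ContinuousOn (fun x : ℝ => 1 / ((1 + x) * Real.log 2)) (Icc a b) := by
  refine continuousOn_const.div (by fun_prop) fun x hx => ?_
  have hx0 : 0 < 1 + x := by linarith [hx.1]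
  positivity

lemma integral_gaussDensity {a b : ℝ} (ha : 0 ≤ a) (hab : a ≤ b) :
    ∫ x in a..b, 1 / ((1 + x) * Real.log 2) = Real.logb 2 (1 + b) - Real.logb 2 (1 + a) := by
  refine intervalIntegral.integral_eq_sub_of_hasDerivAt (f := fun x => Real.logb 2 (1 + x))
    (fun x hx => ?_) ((continuousOn_gaussDensity ha).intervalIntegrable_of_Icc hab)
  have hx0 : 0 < 1 + x := by linarith [(uIcc_of_le hab ▸ hx).1]
  refine (((hasDerivAt_id' x).const_add 1).log hx0.ne' |>.div_const (Real.log 2)).congr_deriv ?_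
  rw [div_div]

lemma gaussMeasure_Ioc {a b : ℝ} (ha : 0 ≤ a) (hab : a ≤ b) (hb : b ≤ 1) :
    gaussMeasure (Ioc a b) = ENNReal.ofReal (Real.logb 2 (1 + b) - Real.logb 2 (1 + a)) := by
  have hint := (continuousOn_gaussDensity (b := b) ha).intervalIntegrable_of_Icc (μ := volume) hab
  rw [gaussMeasure, withDensity_apply _ measurableSet_Ioc,
    Measure.restrict_restrict measurableSet_Ioc, inter_eq_left.2 (Ioc_subset_Ioc ha hb),
    ← integral_gaussDensity ha hab, intervalIntegral.integral_of_le hab,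
    ofReal_integral_eq_lintegral_ofReal hint.1]
  filter_upwards [ae_restrict_mem measurableSet_Ioc] with x hx
  have hx0 : 0 < 1 + x := by linarith [hx.1]
  exact div_nonneg zero_le_one (by positivity)

instance : IsProbabilityMeasure gaussMeasure where
  measure_univ := by
    rw [← gaussMeasure_inter_Ioc, univ_inter, gaussMeasure_Ioc le_rfl zero_le_one le_rfl]
    norm_num

lemma fract_le_iff_exists_nat {a y : ℝ} (ha1 : a < 1) (hy : 1 ≤ y) :
    Int.fract y ≤ a ↔ ∃ k : ℕ, y ∈ Icc ((k : ℝ) + 1) (k + 1 + a) := by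
  constructor
  · intro h
    have hfloor_pos : 1 ≤ ⌊y⌋ := Int.le_floor.2 (mod_cast hy)
    obtain ⟨k, hk⟩ := Int.eq_ofNat_of_zero_le (sub_nonneg.2 hfloor_pos)
    have hfloor : (⌊y⌋ : ℝ) = k + 1 := mod_cast sub_eq_iff_eq_add.1 hk
    have hfract := Int.floor_add_fract y
    exact ⟨k, by linarith [Int.fract_nonneg y], by linarith⟩
  · rintro ⟨k, hk, hka⟩
    have hfloor : ⌊y⌋ = (k : ℤ) + 1 := by
      rw [Int.floor_eq_iff]
      push_cast
      exact ⟨hk, by linarith⟩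
    rw [Int.fract, hfloor]
    push_cast
    linarith

lemma gaussMap_preimage_Iic_inter_Ioc {a : ℝ} (ha0 : 0 ≤ a) (ha1 : a < 1) :
    gaussMap ⁻¹' Iic a ∩ Ioc 0 1 = ⋃ k : ℕ, Icc (1 / ((k : ℝ) + 1 + a)) (1 / (k + 1)) := by
  have hmem {x : ℝ} (hx : 0 < x) (k : ℕ) : x ∈ Icc (1 / ((k : ℝ) + 1 + a)) (1 / (k + 1)) ↔
      1 / x ∈ Icc ((k : ℝ) + 1) (k + 1 + a) := by
    rw [mem_Icc, mem_Icc, div_le_comm₀ (by positivity) hx, le_div_comm₀ hx (by positivity),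
      and_comm]
  ext x
  rw [mem_iUnion]
  constructor
  · rintro ⟨hxa, hx0, hx1⟩
    obtain ⟨k, hk⟩ := (fract_le_iff_exists_nat ha1 ((one_le_div hx0).2 hx1)).1 hxa
    exact ⟨k, (hmem hx0 k).2 hk⟩
  · rintro ⟨k, hk⟩
    have hx0 : 0 < x := lt_of_lt_of_le (by positivity) hk.1
    have hx1 : x ≤ 1 := hk.2.trans ((div_le_one (by positivity)).2 (by simp))
    exact ⟨(fract_le_iff_exists_nat ha1 ((one_le_div hx0).2 hx1)).2 ⟨k, (hmem hx0 k).1 hk⟩,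
      hx0, hx1⟩

lemma pairwise_disjoint_Icc_one_div {a : ℝ} (ha0 : 0 ≤ a) (ha1 : a < 1) :
    Pairwise (Function.onFun Disjoint
      fun k : ℕ => Icc (1 / ((k : ℝ) + 1 + a)) (1 / (k + 1))) := by
  have hanti : Antitone fun k : ℕ => 1 / ((k : ℝ) + 1) := antitone_nat_of_succ_le fun k => by
    push_cast
    gcongr
    simp
  have hsub (k : ℕ) : Icc (1 / ((k : ℝ) + 1 + a)) (1 / (k + 1)) ⊆
      Ioc (1 / (((Order.succ k : ℕ) : ℝ) + 1)) (1 / (k + 1)) := by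
    refine Icc_subset_Ioc (one_div_lt_one_div_of_lt (by positivity) ?_) le_rfl
    simpa using ha1
  exact hanti.pairwise_disjoint_on_Ioc_succ.mono fun i j h => h.mono (hsub i) (hsub j)

lemma logb_one_add_one_div_sub (k : ℕ) {a : ℝ} (ha : 0 ≤ a) :
    Real.logb 2 (1 + 1 / ((k : ℝ) + 1)) - Real.logb 2 (1 + 1 / (k + 1 + a)) =
      Real.logb 2 (1 + a / (k + 1)) - Real.logb 2 (1 + a / ((k + 1 : ℕ) + 1)) := by
  rw [← Real.logb_div (by positivity) (by positivity), ← Real.logb_div (by positivity)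
    (by positivity)]
  congr 1
  push_cast
  field_simp
  ring

lemma hasSum_sub_succ_of_antitone {g : ℕ → ℝ} {l : ℝ} (hg : Antitone g)
    (hl : Tendsto g atTop (𝓝 l)) : HasSum (fun k => g k - g (k + 1)) (g 0 - l) := by
  rw [hasSum_iff_tendsto_nat_of_nonneg fun k => sub_nonneg.2 (hg k.le_succ)]
  simpa only [Finset.sum_range_sub'] using hl.const_sub (g 0)

lemma hasSum_logb_one_add_one_div_sub {a : ℝ} (ha : 0 ≤ a) :
    HasSum (fun k : ℕ => Real.logb 2 (1 + 1 / ((k : ℝ) + 1)) - Real.logb 2 (1 + 1 / (k + 1 + a)))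
      (Real.logb 2 (1 + a)) := by
  have hanti : Antitone fun k : ℕ => Real.logb 2 (1 + a / ((k : ℝ) + 1)) := fun i j hij =>
    Real.logb_le_logb_of_le one_lt_two (by positivity) (by gcongr)
  have hlim : Tendsto (fun k : ℕ => Real.logb 2 (1 + a / ((k : ℝ) + 1))) atTop (𝓝 0) := by
    have hdiv : Tendsto (fun k : ℕ => 1 + a / ((k : ℝ) + 1)) atTop (𝓝 1) := by
      simpa using ((tendsto_const_div_atTop_nhds_zero_nat a).comp
        (tendsto_add_atTop_nat 1)).const_add 1
    simpa [Real.logb] using (hdiv.log one_ne_zero).div_const (Real.log 2)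
  simpa only [logb_one_add_one_div_sub _ ha, Nat.cast_zero, zero_add, div_one, sub_zero] using
    hasSum_sub_succ_of_antitone hanti hlim

lemma gaussMeasure_gaussMap_preimage_Iic {a : ℝ} (ha0 : 0 ≤ a) (ha1 : a < 1) :
    gaussMeasure (gaussMap ⁻¹' Iic a) = gaussMeasure (Iic a) := by
  have hpiece (k : ℕ) : gaussMeasure (Icc (1 / ((k : ℝ) + 1 + a)) (1 / (k + 1))) =
      ENNReal.ofReal
        (Real.logb 2 (1 + 1 / ((k : ℝ) + 1)) - Real.logb 2 (1 + 1 / (k + 1 + a))) := by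
    rw [measure_congr Ioc_ae_eq_Icc.symm, gaussMeasure_Ioc (by positivity)
      (one_div_le_one_div_of_le (by positivity) (by linarith))
      ((div_le_one (by positivity)).2 (by simp))]
  have hnonneg (k : ℕ) :
      0 ≤ Real.logb 2 (1 + 1 / ((k : ℝ) + 1)) - Real.logb 2 (1 + 1 / (k + 1 + a)) :=
    sub_nonneg.2 (Real.logb_le_logb_of_le one_lt_two (by positivity)
      (add_le_add le_rfl (one_div_le_one_div_of_le (by positivity) (by linarith))))
  have hsum := hasSum_logb_one_add_one_div_sub ha0
  rw [← gaussMeasure_inter_Ioc, gaussMap_preimage_Iic_inter_Ioc ha0 ha1,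
    measure_iUnion (pairwise_disjoint_Icc_one_div ha0 ha1) fun _ => measurableSet_Icc,
    tsum_congr hpiece, ← ENNReal.ofReal_tsum_of_nonneg hnonneg hsum.summable, hsum.tsum_eq,
    ← gaussMeasure_inter_Ioc, Iic_inter_Ioc_of_le ha1.le, gaussMeasure_Ioc le_rfl ha0 ha1.le]
  simp

lemma measurable_gaussMap : Measurable gaussMap :=
  measurable_fract.comp (measurable_const.div measurable_id)

theorem measurePreserving_gaussMap : MeasurePreserving gaussMap gaussMeasure gaussMeasure := by
  refine ⟨measurable_gaussMap, ?_⟩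
  have : IsProbabilityMeasure (Measure.map gaussMap gaussMeasure) :=
    Measure.isProbabilityMeasure_map measurable_gaussMap.aemeasurable
  refine Measure.ext_of_Iic _ _ fun a => ?_
  rw [Measure.map_apply measurable_gaussMap measurableSet_Iic]
  rcases lt_or_ge a 0 with ha0 | ha0
  · have hpre : gaussMap ⁻¹' Iic a = ∅ :=
      eq_empty_of_forall_notMem fun x hx => (Int.fract_nonneg (1 / x)).not_gt (hx.trans_lt ha0)
    have hIic : Iic a ∩ Ioc 0 1 = ∅ :=
      eq_empty_of_forall_notMem fun x hx => hx.2.1.not_gt (hx.1.trans_lt ha0)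
    rw [hpre, ← gaussMeasure_inter_Ioc (Iic a), hIic]
  rcases lt_or_ge a 1 with ha1 | ha1
  · exact gaussMeasure_gaussMap_preimage_Iic ha0 ha1
  · have hpre : gaussMap ⁻¹' Iic a = univ :=
      eq_univ_of_forall fun x => (Int.fract_lt_one (1 / x)).le.trans ha1
    have hIic : Iic a ∩ Ioc 0 1 = univ ∩ Ioc 0 1 := by
      rw [univ_inter, inter_eq_right]
      exact fun x hx => hx.2.trans ha1
    rw [hpre, ← gaussMeasure_inter_Ioc (Iic a), hIic, gaussMeasure_inter_Ioc]

end GaussMeasure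

section Ergodicity

open Metric

lemma ae_mem_of_frequently_le_measure_inter_closedBall_div {X : Type*} [MetricSpace X]
    [MeasurableSpace X] [BorelSpace X] [SecondCountableTopology X] [HasBesicovitchCovering X]
    (μ : Measure X) [IsLocallyFiniteMeasure μ] {s : Set X} (hs : MeasurableSet s) {c : ℝ≥0∞}
    (hc : c ≠ 0) :
    ∀ᵐ x ∂μ, (∃ᶠ r in 𝓝[>] 0, c ≤ μ (s ∩ closedBall x r) / μ (closedBall x r)) → x ∈ s := by
  filter_upwards [Besicovitch.ae_tendsto_measure_inter_div_of_measurableSet μ hs]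
    with x hdensity hfreq
  by_contra hxs
  rw [indicator_of_notMem hxs] at hdensity
  refine hfreq ((hdensity.eventually_lt_const (pos_iff_ne_zero.2 hc)).mono fun r hr => hr.not_ge)

lemma cfBranch_mem_closedBall {x : ℝ} (hx : x ∈ unitIrrationals) (n : ℕ) {t : ℝ}
    (ht : t ∈ Icc 0 1) : cfBranch x n t ∈ closedBall x (1 / (cfq x (n + 1) : ℝ) ^ 2) := by
  obtain ⟨hpos, hlt⟩ := iterate_gaussMap_mem_Ioo hx n
  have hq : (0 : ℝ) < cfq x (n + 1) := mod_cast cfq_succ_pos hx n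
  have hden {s : ℝ} (hs : 0 ≤ s) : (cfq x (n + 1) : ℝ) ≤ cfDen x n s :=
    cfDen_zero x n ▸ cfDen_le_cfDen x n hs
  have hprod : (cfq x (n + 1) : ℝ) * cfq x (n + 1) ≤ cfDen x n t * cfDen x n (gaussMap^[n] x) :=
    mul_le_mul (hden ht.1) (hden hpos.le) hq.le (cfDen_pos hx n ht.1).le
  have hdist : |t - gaussMap^[n] x| ≤ 1 := abs_le.2 ⟨by linarith [ht.1], by linarith [ht.2]⟩
  calc dist (cfBranch x n t) x
      = |cfBranch x n t - cfBranch x n (gaussMap^[n] x)| := by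
        rw [cfBranch_iterate_gaussMap hx, Real.dist_eq]
    _ = |t - gaussMap^[n] x| / (cfDen x n t * cfDen x n (gaussMap^[n] x)) :=
        abs_cfBranch_sub_cfBranch hx n hpos.le ht.1
    _ ≤ 1 / (cfq x (n + 1) * cfq x (n + 1)) :=
        div_le_div₀ zero_le_one hdist (mul_pos hq hq) hprod
    _ = 1 / (cfq x (n + 1) : ℝ) ^ 2 := by rw [sq]

lemma ofReal_mul_volume_le_volume_cfBranch_image {x : ℝ} (hx : x ∈ unitIrrationals) (n : ℕ)
    {s : Set ℝ} (hs : MeasurableSet s) (hs01 : s ⊆ Icc 0 1) :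
    ENNReal.ofReal (1 / (mediantDen x n : ℝ) ^ 2) * volume s ≤ volume (cfBranch x n '' s) := by
  have himage : volume (cfBranch x n '' s) =
      ∫⁻ t in s, ENNReal.ofReal |(-1) ^ n / cfDen x n t ^ 2| := by
    simpa using lintegral_image_eq_lintegral_abs_deriv_mul hs
      (fun t ht => (hasDerivAt_cfBranch hx n (hs01 ht).1).hasDerivWithinAt)
      ((injOn_cfBranch hx n).mono fun t ht => (hs01 ht).1) fun _ => 1
  rw [himage, ← setLIntegral_const]
  refine setLIntegral_mono' hs fun t ht => ENNReal.ofReal_le_ofReal ?_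
  have hden := cfDen_pos hx n (hs01 ht).1
  rw [abs_div, abs_neg_one_pow, abs_of_pos (pow_pos hden 2), ← cfDen_one]
  gcongr
  exact cfDen_le_cfDen x n (hs01 ht).2

lemma cfBranch_image_inter_Ioo_subset {x : ℝ} (hx : x ∈ unitIrrationals) (n : ℕ) {s : Set ℝ}
    (hinv : gaussMap ⁻¹' s = s) : cfBranch x n '' (s ∩ Ioo 0 1) ⊆ s := by
  have hiter : gaussMap^[n] ⁻¹' s = s := by
    rw [preimage_iterate_eq, Function.iterate_fixed hinv]
  rintro _ ⟨t, ⟨hts, ht⟩, rfl⟩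
  rw [← hiter, mem_preimage, iterate_gaussMap_cfBranch hx n ht]
  exact hts

lemma volume_div_eight_le_volume_inter_closedBall_div {x : ℝ} (hx : x ∈ unitIrrationals) (n : ℕ)
    {s : Set ℝ} (hs : MeasurableSet s) (hinv : gaussMap ⁻¹' s = s) :
    volume (s ∩ Ioo 0 1) / 8 ≤ volume (s ∩ closedBall x (1 / (cfq x (n + 1) : ℝ) ^ 2)) /
      volume (closedBall x (1 / (cfq x (n + 1) : ℝ) ^ 2)) := by
  have hq : (0 : ℝ) < cfq x (n + 1) := mod_cast cfq_succ_pos hx n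
  have hM : (0 : ℝ) < mediantDen x n := cfDen_one x n ▸ cfDen_pos hx n zero_le_one
  have hMq : (mediantDen x n : ℝ) ≤ 2 * cfq x (n + 1) := mod_cast mediantDen_le_two_mul_cfq hx n
  have hsubset : cfBranch x n '' (s ∩ Ioo 0 1) ⊆
      s ∩ closedBall x (1 / (cfq x (n + 1) : ℝ) ^ 2) := by
    refine subset_inter (cfBranch_image_inter_Ioo_subset hx n hinv) ?_
    rintro _ ⟨t, ht, rfl⟩
    exact cfBranch_mem_closedBall hx n (Ioo_subset_Icc_self ht.2)
  have hradius : 8⁻¹ * (2 * (1 / (cfq x (n + 1) : ℝ) ^ 2)) ≤ 1 / (mediantDen x n : ℝ) ^ 2 := by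
    calc 8⁻¹ * (2 * (1 / (cfq x (n + 1) : ℝ) ^ 2)) = 1 / (2 * cfq x (n + 1) : ℝ) ^ 2 := by
          field_simp
          norm_num
      _ ≤ 1 / (mediantDen x n : ℝ) ^ 2 := by gcongr
  rw [Real.volume_closedBall, ENNReal.le_div_iff_mul_le (.inl (by simp [hq]))
    (.inl ENNReal.ofReal_ne_top)]
  calc volume (s ∩ Ioo 0 1) / 8 * ENNReal.ofReal (2 * (1 / (cfq x (n + 1) : ℝ) ^ 2))
      = ENNReal.ofReal (8⁻¹ * (2 * (1 / (cfq x (n + 1) : ℝ) ^ 2))) * volume (s ∩ Ioo 0 1) := by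
        rw [ENNReal.ofReal_mul (p := 8⁻¹) (by positivity), ENNReal.ofReal_inv_of_pos (by norm_num),
          ENNReal.ofReal_ofNat, ENNReal.div_eq_inv_mul, mul_right_comm]
    _ ≤ ENNReal.ofReal (1 / (mediantDen x n : ℝ) ^ 2) * volume (s ∩ Ioo 0 1) := by gcongr
    _ ≤ volume (cfBranch x n '' (s ∩ Ioo 0 1)) :=
        ofReal_mul_volume_le_volume_cfBranch_image hx n (hs.inter measurableSet_Ioo)
          (inter_subset_right.trans Ioo_subset_Icc_self)
    _ ≤ _ := measure_mono hsubset

lemma ae_mem_unitIrrationals : ∀ᵐ x ∂volume.restrict (Ioc (0 : ℝ) 1), x ∈ unitIrrationals := by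
  rw [ae_restrict_iff' measurableSet_Ioc]
  filter_upwards [(countable_range ((↑) : ℚ → ℝ)).ae_notMem volume] with x hirr hx
  exact ⟨hirr, hx.1, lt_of_le_of_ne hx.2 (Irrational.ne_one hirr)⟩

lemma tendsto_one_div_cfq_sq {x : ℝ} (hx : x ∈ unitIrrationals) :
    Tendsto (fun n => 1 / (cfq x (n + 1) : ℝ) ^ 2) atTop (𝓝[>] 0) := by
  have hq := tendsto_natCast_atTop_atTop (R := ℝ).comp (tendsto_cfq_atTop hx)
  simpa only [one_div] using!
    tendsto_inv_atTop_nhdsGT_zero.comp ((tendsto_pow_atTop two_ne_zero).comp hq)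

lemma ae_mem_of_gaussMap_preimage_eq {s : Set ℝ} (hs : MeasurableSet s)
    (hinv : gaussMap ⁻¹' s = s) (h0 : volume (s ∩ Ioo 0 1) ≠ 0) :
    ∀ᵐ x ∂volume.restrict (Ioc (0 : ℝ) 1), x ∈ s := by
  have hc : volume (s ∩ Ioo 0 1) / 8 ≠ 0 := ENNReal.div_ne_zero.2 ⟨h0, by simp⟩
  filter_upwards [ae_mem_unitIrrationals,
    ae_restrict_of_ae (ae_mem_of_frequently_le_measure_inter_closedBall_div volume hs hc)]
    with x hx hmem
  exact hmem ((tendsto_one_div_cfq_sq hx).frequently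
    (Frequently.of_forall fun n => volume_div_eight_le_volume_inter_closedBall_div hx n hs hinv))

theorem ergodic_gaussMap : Ergodic gaussMap gaussMeasure := by
  refine { measurePreserving_gaussMap with aeconst_set := fun s hs hinv => ?_ }
  rw [eventuallyConst_set, ae_gaussMeasure]
  by_cases h0 : volume (s ∩ Ioo 0 1) = 0
  · refine .inr (measure_eq_zero_iff_ae_notMem.1 ?_)
    rwa [← Measure.restrict_congr_set Ioo_ae_eq_Ioc, Measure.restrict_apply hs]
  · exact .inl (ae_mem_of_gaussMap_preimage_eq hs hinv h0)

end Ergodicity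

section GaussIntegral

lemma hasSum_neg_one_pow_div_succ_sq :
    HasSum (fun k : ℕ => (-1 : ℝ) ^ k / ((k : ℝ) + 1) ^ 2) (Real.pi ^ 2 / 12) := by
  have hbernoulli : ((Polynomial.bernoulli 2).map (algebraMap ℚ ℝ)).eval (1 / 2) = -1 / 12 := by
    simp only [Polynomial.bernoulli, Finset.sum_range_succ, Polynomial.map_add,
      Polynomial.eval_add, Polynomial.map_monomial, Polynomial.eval_monomial,
      Finset.sum_range_zero]
    norm_num [bernoulli_two]
  have hcos (n : ℕ) : Real.cos (2 * Real.pi * n * (1 / 2)) = (-1) ^ n := by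
    rw [← Real.cos_nat_mul_pi]
    ring_nf
  have hzeta : HasSum (fun n : ℕ => 1 / (n : ℝ) ^ 2 * (-1) ^ n) (-(Real.pi ^ 2 / 12)) := by
    have hcosine := hasSum_one_div_nat_pow_mul_cos one_ne_zero
      (show (1 / 2 : ℝ) ∈ Icc 0 1 by norm_num)
    simp only [hcos, mul_one, hbernoulli] at hcosine
    convert hcosine using 1
    norm_num [Nat.factorial]
    ring
  have hshift := ((hasSum_nat_add_iff' 1).2 hzeta).neg
  simp only [Finset.range_one, Finset.sum_singleton, Nat.cast_zero, zero_pow two_ne_zero,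
    div_zero, zero_mul, sub_zero, neg_neg] at hshift
  refine hshift.congr_fun fun k => ?_
  push_cast
  ring

lemma hasDerivAt_pow_mul_log_primitive (k : ℕ) {x : ℝ} (hx : 0 < x) :
    HasDerivAt (fun x : ℝ => x ^ (k + 1) / ((k : ℝ) + 1) ^ 2 - x ^ k * (x * Real.log x) / (k + 1))
      (x ^ k * -Real.log x) x := by
  have hpow : HasDerivAt (fun x : ℝ => x ^ (k + 1)) ((k + 1 : ℕ) * x ^ k) x :=
    hasDerivAt_pow (k + 1) x
  have hlog : HasDerivAt (fun x : ℝ => x ^ k * (x * Real.log x))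
      ((k + 1 : ℕ) * x ^ k * Real.log x + x ^ (k + 1) * x⁻¹) x := by
    simpa only [pow_succ, mul_assoc, Pi.mul_def] using hpow.mul (Real.hasDerivAt_log hx.ne')
  refine ((hpow.div_const _).sub (hlog.div_const _)).congr_deriv ?_
  push_cast
  field_simp
  ring

lemma continuous_pow_mul_log_primitive (k : ℕ) : Continuous fun x : ℝ =>
    x ^ (k + 1) / ((k : ℝ) + 1) ^ 2 - x ^ k * (x * Real.log x) / (k + 1) :=
  ((continuous_pow (k + 1)).div_const _).sub
    (((continuous_pow k).mul Real.continuous_mul_log).div_const _)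

lemma pow_mul_neg_log_nonneg (k : ℕ) {x : ℝ} (hx : x ∈ Icc 0 1) : 0 ≤ x ^ k * -Real.log x :=
  mul_nonneg (pow_nonneg hx.1 _) (neg_nonneg.2 (Real.log_nonpos hx.1 hx.2))

lemma integrableOn_pow_mul_neg_log (k : ℕ) :
    IntegrableOn (fun x : ℝ => x ^ k * -Real.log x) (Ioc 0 1) :=
  intervalIntegral.integrableOn_deriv_of_nonneg (continuous_pow_mul_log_primitive k).continuousOn
    (fun _ hx => hasDerivAt_pow_mul_log_primitive k hx.1)
    fun _ hx => pow_mul_neg_log_nonneg k (Ioo_subset_Icc_self hx)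

lemma integral_pow_mul_neg_log (k : ℕ) :
    ∫ x in Ioc (0 : ℝ) 1, x ^ k * -Real.log x = 1 / ((k : ℝ) + 1) ^ 2 := by
  rw [← intervalIntegral.integral_of_le zero_le_one,
    intervalIntegral.integral_eq_sub_of_hasDerivAt_of_le zero_le_one
      (continuous_pow_mul_log_primitive k).continuousOn
      (fun x hx => hasDerivAt_pow_mul_log_primitive k hx.1)
      ((intervalIntegrable_iff_integrableOn_Ioc_of_le zero_le_one).2
        (integrableOn_pow_mul_neg_log k))]
  simp

lemma integral_norm_neg_one_pow_mul_pow_mul_neg_log (k : ℕ) :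
    ∫ x in Ioc (0 : ℝ) 1, ‖(-1) ^ k * (x ^ k * -Real.log x)‖ = 1 / ((k : ℝ) + 1) ^ 2 := by
  rw [← integral_pow_mul_neg_log]
  refine setIntegral_congr_fun measurableSet_Ioc fun x hx => ?_
  rw [norm_mul, norm_pow, norm_neg, norm_one, one_pow, one_mul,
    Real.norm_of_nonneg (pow_mul_neg_log_nonneg k (Ioc_subset_Icc_self hx))]

lemma hasSum_neg_one_pow_mul_pow_mul_neg_log {x : ℝ} (hx : x ∈ Ioo 0 1) :
    HasSum (fun k : ℕ => (-1) ^ k * (x ^ k * -Real.log x)) (-Real.log x / (1 + x)) := by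
  have hgeom := (hasSum_geometric_of_abs_lt_one (r := -x)
    (by rw [abs_neg, abs_of_pos hx.1]; exact hx.2)).mul_right (-Real.log x)
  rw [sub_neg_eq_add, inv_mul_eq_div] at hgeom
  exact hgeom.congr_fun fun k => by rw [← mul_assoc, ← mul_pow, neg_one_mul]

lemma integral_neg_log_div_one_add :
    ∫ x in Ioc (0 : ℝ) 1, -Real.log x / (1 + x) = Real.pi ^ 2 / 12 := by
  have hsummable : Summable fun k : ℕ => 1 / ((k : ℝ) + 1) ^ 2 := by
    simpa using (hasSum_neg_one_pow_div_succ_sq.summable).norm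
  have hterm (k : ℕ) : ∫ x in Ioc (0 : ℝ) 1, (-1) ^ k * (x ^ k * -Real.log x) =
      (-1) ^ k / ((k : ℝ) + 1) ^ 2 := by
    rw [integral_const_mul, integral_pow_mul_neg_log, mul_one_div]
  have hexchange := hasSum_integral_of_summable_integral_norm
    (fun k => (integrableOn_pow_mul_neg_log k).const_mul ((-1) ^ k))
    (hsummable.congr fun k => (integral_norm_neg_one_pow_mul_pow_mul_neg_log k).symm)
  simp only [hterm] at hexchange
  rw [← hexchange.unique hasSum_neg_one_pow_div_succ_sq, integral_Ioc_eq_integral_Ioo,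
    integral_Ioc_eq_integral_Ioo]
  exact setIntegral_congr_fun measurableSet_Ioo fun x hx =>
    (hasSum_neg_one_pow_mul_pow_mul_neg_log hx).tsum_eq.symm

lemma integrableOn_neg_log_div_one_add :
    IntegrableOn (fun x : ℝ => -Real.log x / (1 + x)) (Ioc 0 1) := by
  have hlog : IntegrableOn (fun x : ℝ => -Real.log x) (Ioc 0 1) := by
    simpa using integrableOn_pow_mul_neg_log 0
  refine Integrable.mono hlog (Measurable.aestronglyMeasurable (by fun_prop)) ?_
  filter_upwards [ae_restrict_mem measurableSet_Ioc] with x hx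
  rw [norm_div]
  refine div_le_self (norm_nonneg _) ?_
  rw [Real.norm_eq_abs, abs_of_pos (by linarith [hx.1])]
  linarith [hx.1]

lemma toReal_gaussDensity_smul {x : ℝ} (hx : 0 < x) (y : ℝ) :
    (ENNReal.ofReal (1 / ((1 + x) * Real.log 2))).toReal • y =
      (Real.log 2)⁻¹ * (y / (1 + x)) := by
  rw [ENNReal.toReal_ofReal (by positivity), smul_eq_mul]
  field_simp

lemma integrable_neg_log_gaussMeasure : Integrable (fun x => -Real.log x) gaussMeasure := by
  rw [gaussMeasure, integrable_withDensity_iff_integrable_smul' (by fun_prop) (by simp)]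
  exact (integrableOn_congr_fun (fun x hx => toReal_gaussDensity_smul hx.1 _)
    measurableSet_Ioc).2 (integrableOn_neg_log_div_one_add.const_mul _)

lemma integral_neg_log_gaussMeasure :
    ∫ x, -Real.log x ∂gaussMeasure = Real.pi ^ 2 / (12 * Real.log 2) := by
  rw [gaussMeasure, integral_withDensity_eq_integral_toReal_smul (by fun_prop) (by simp),
    setIntegral_congr_fun measurableSet_Ioc fun x hx => toReal_gaussDensity_smul hx.1 _,
    integral_const_mul, integral_neg_log_div_one_add, inv_mul_eq_div, div_div]

end GaussIntegral

/-- Lochs-type theorem from Farey to continued fractions: for Lebesgue-a.e. `x`,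
`L_n(x, ℱ, 𝒞ℱ)/log n → 12 log 2/π²`. -/
theorem lochsFtoCF_ae :
    ∀ᵐ x ∂(volume.restrict (Set.Icc (0 : ℝ) 1)),
      Tendsto (fun n : ℕ => (lochsFtoCF x n : ℝ) / Real.log n) atTop
        (nhds (12 * Real.log 2 / Real.pi ^ 2)) := by
  rw [← Measure.restrict_congr_set Ioc_ae_eq_Icc]
  have hbirkhoff := ae_tendsto_birkhoffAverage ergodic_gaussMap integrable_neg_log_gaussMeasure
  rw [integral_neg_log_gaussMeasure, ae_gaussMeasure] at hbirkhoff
  filter_upwards [hbirkhoff, ae_mem_unitIrrationals] with x haverage hx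
  rw [← inv_div]
  exact tendsto_lochsFtoCF_div_log hx (by positivity) haverage
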